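/- arXiv:2102.10346 — 5 statements merged into one kernel-verified Lean document; each statement's English description precedes it below -/
import Mathlib

section
/- Let p ∈ [0, 1] and let {S_t}_{t∈ℕ} be an n-dimensional martingale adapted to a filtration {F_t}_{t∈ℕ} with S_0 = 0 and E[|S_t|^{1+p}] < ∞ for every t, and set X_i = S_i − S_{i−1}. Then E[|S_t|^{1+p}] ≤ 2^{1−p} n^{1−(1+p)/2} Σ_{i=1}^{t} E[|X_i|^{1+p}]. -/
open MeasureTheory Filter

/-!
The bound holds in every real Hilbert space with the dimension-free constant `2 ^ (1 - p)`. The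
duality map `J x = ‖x‖ ^ (p - 1) • x` satisfies
`⟪J x - J y, x - y⟫ ≤ 2 ^ (1 - p) * ‖x - y‖ ^ (1 + p)`; since `(1 + p) • J` is the gradient of
`‖·‖ ^ (1 + p)`, integrating this along the segment from `x` to `x + y` gives
`‖x + y‖ ^ (1 + p) ≤ ‖x‖ ^ (1 + p) + (1 + p) * ⟪J x, y⟫ + 2 ^ (1 - p) * ‖y‖ ^ (1 + p)`.
For `x = S_i` and `y = S_{i+1} - S_i` the middle term has expectation zero.
-/

section RealPowers

variable {a b d p : ℝ}

lemma rpow_add_rpow_le_two_rpow_mul (ha : 0 ≤ a) (hb : 0 ≤ b) (hp0 : 0 ≤ p) (hp1 : p ≤ 1) :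
    a ^ p + b ^ p ≤ 2 ^ (1 - p) * (a + b) ^ p := by
  have hmid : (a ^ p + b ^ p) / 2 ≤ ((a + b) / 2) ^ p := by
    simpa only [smul_eq_mul, one_div_mul_eq_div, ← add_div] using
      (Real.concaveOn_rpow hp0 hp1).2 (Set.mem_Ici.2 ha) (Set.mem_Ici.2 hb)
        one_half_pos.le one_half_pos.le (add_halves 1)
  rw [Real.div_rpow (by positivity) zero_le_two] at hmid
  rw [Real.rpow_sub two_pos, Real.rpow_one]
  linarith [show 2 / 2 ^ p * (a + b) ^ p = 2 * ((a + b) ^ p / 2 ^ p) by ring]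

lemma rpow_sub_rpow_mul_sub_le (ha : 0 ≤ a) (hb : 0 ≤ b) (hp0 : 0 ≤ p) (hp1 : p ≤ 1) :
    (a ^ p - b ^ p) * (a - b) ≤ |a - b| ^ (1 + p) := by
  wlog hba : b ≤ a generalizing a b
  · rw [abs_sub_comm, ← neg_mul_neg, neg_sub, neg_sub]
    exact this hb ha (le_of_not_ge hba)
  have hsub : a ^ p ≤ b ^ p + (a - b) ^ p := by
    simpa using Real.rpow_add_le_add_rpow hb (sub_nonneg.2 hba) hp0 hp1
  rw [abs_of_nonneg (sub_nonneg.2 hba), add_comm,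
    Real.rpow_add_one' (sub_nonneg.2 hba) (by positivity)]
  exact mul_le_mul_of_nonneg_right (sub_le_iff_le_add'.2 hsub) (sub_nonneg.2 hba)

lemma rpow_sub_one_mul_self (ha : 0 ≤ a) (hp : p ≠ 0) : a ^ (p - 1) * a = a ^ p := by
  rw [← Real.rpow_add_one' ha (by simpa using hp), sub_add_cancel]

lemma concaveOn_const_mul_rpow_add_const_mul_sub {C r : ℝ} (hC : 0 ≤ C) (hr0 : 0 ≤ r) (hr1 : r ≤ 1)
    (k c : ℝ) : ConcaveOn ℝ (Set.Ici 0) fun s ↦ C * s ^ r + k * (c - s) := by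
  refine ((Real.concaveOn_rpow hr0 hr1).smul hC).add
    ⟨convex_Ici 0, fun x _ y _ s t _ _ hst ↦ le_of_eq ?_⟩
  obtain rfl := eq_sub_of_add_eq hst
  simp only [smul_eq_mul]
  ring

/- By the cosine rule `(a ^ 2 + b ^ 2 - d ^ 2) / 2` is the inner product of two vectors of lengths
`a` and `b` at distance `d`. As a function of `d ^ 2` the difference of the two sides is concave, so
only the collinear configurations `d = |a - b|` and `d = a + b` matter. -/
lemma rpow_sub_cosine_rule_le (ha : 0 ≤ a) (hb : 0 ≤ b) (hp0 : 0 < p) (hp1 : p ≤ 1)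
    (hd : |a - b| ≤ d) (hd' : d ≤ a + b) :
    a ^ (1 + p) + b ^ (1 + p) - (a ^ (p - 1) + b ^ (p - 1)) * ((a ^ 2 + b ^ 2 - d ^ 2) / 2) ≤
      2 ^ (1 - p) * d ^ (1 + p) := by
  let F : ℝ → ℝ := fun s ↦ 2 ^ (1 - p) * s ^ ((1 + p) / 2) +
    (a ^ (p - 1) + b ^ (p - 1)) / 2 * (a ^ 2 + b ^ 2 - s)
  have hF_sq {x : ℝ} (hx : 0 ≤ x) : F (x ^ 2) = 2 ^ (1 - p) * x ^ (1 + p) +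
      (a ^ (p - 1) + b ^ (p - 1)) / 2 * (a ^ 2 + b ^ 2 - x ^ 2) := by
    simp only [F]
    rw [← Real.rpow_natCast_mul hx]
    congr 3
    push_cast
    ring
  have hF_concave : ConcaveOn ℝ (Set.Ici 0) F :=
    concaveOn_const_mul_rpow_add_const_mul_sub (by positivity) (by linarith) (by linarith) _ _
  have ha' : a ^ (p - 1) * a = a ^ p := rpow_sub_one_mul_self ha hp0.ne'
  have hb' : b ^ (p - 1) * b = b ^ p := rpow_sub_one_mul_self hb hp0.ne'
  have rpow_one_add_eq {x : ℝ} (hx : 0 ≤ x) : x ^ (1 + p) = x * x ^ p :=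
    Real.rpow_one_add' hx (by linarith)
  have hF_left : a ^ (1 + p) + b ^ (1 + p) ≤ F (|a - b| ^ 2) := by
    have hle := (rpow_sub_rpow_mul_sub_le ha hb hp0.le hp1).trans
      (le_mul_of_one_le_left (by positivity) (Real.one_le_rpow one_le_two (sub_nonneg.2 hp1)))
    rw [hF_sq (abs_nonneg _), sq_abs, rpow_one_add_eq ha, rpow_one_add_eq hb]
    linear_combination hle - b * ha' - a * hb'
  have hF_right : a ^ (1 + p) + b ^ (1 + p) ≤ F ((a + b) ^ 2) := by
    have hle := mul_le_mul_of_nonneg_right (rpow_add_rpow_le_two_rpow_mul ha hb hp0.le hp1)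
      (add_nonneg ha hb)
    rw [hF_sq (by positivity), rpow_one_add_eq ha, rpow_one_add_eq hb,
      rpow_one_add_eq (add_nonneg ha hb)]
    linear_combination hle + b * ha' + a * hb'
  have hd0 : 0 ≤ d := (abs_nonneg _).trans hd
  have hd_mem : d ^ 2 ∈ Set.Icc (|a - b| ^ 2) ((a + b) ^ 2) :=
    ⟨pow_le_pow_left₀ (abs_nonneg _) hd 2, pow_le_pow_left₀ hd0 hd' 2⟩
  have hF := (le_min hF_left hF_right).trans (hF_concave.min_le_of_mem_Icc
    (Set.mem_Ici.2 (sq_nonneg _)) (Set.mem_Ici.2 (sq_nonneg _)) hd_mem)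
  rw [hF_sq hd0] at hF
  linarith

lemma rpow_mul_le_rpow_add_rpow (ha : 0 ≤ a) (hb : 0 ≤ b) (hp0 : 0 ≤ p) :
    a ^ p * b ≤ a ^ (1 + p) + b ^ (1 + p) := by
  rw [add_comm 1 p, Real.rpow_add_one' ha (by positivity), Real.rpow_add_one' hb (by positivity)]
  rcases le_total a b with hab | hba
  · exact (mul_le_mul_of_nonneg_right (Real.rpow_le_rpow ha hab hp0) hb).trans
      (le_add_of_nonneg_left (by positivity))
  · exact (mul_le_mul_of_nonneg_left hba (by positivity)).trans
      (le_add_of_nonneg_right (by positivity))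

end RealPowers

section DualityMap

/-- The duality map with gauge `t ↦ t ^ p`. In an inner product space it is the gradient of
`x ↦ ‖x‖ ^ (1 + p) / (1 + p)` for `p > 0`, and a subgradient for `p = 0`. The junk value
`0 ^ (p - 1)` is harmless: the map vanishes at `0` for every `p`. -/
noncomputable def dualityMap {E : Type*} [NormedAddCommGroup E] [NormedSpace ℝ E] (p : ℝ) (x : E) :
    E :=
  ‖x‖ ^ (p - 1) • x

lemma norm_dualityMap_le {E : Type*} [NormedAddCommGroup E] [NormedSpace ℝ E] (p : ℝ) (x : E) :
    ‖dualityMap p x‖ ≤ ‖x‖ ^ p := by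
  rcases eq_or_ne x 0 with rfl | hx
  · simpa [dualityMap] using Real.rpow_nonneg le_rfl p
  · rw [dualityMap, norm_smul, Real.norm_of_nonneg (by positivity),
      ← Real.rpow_add_one (norm_ne_zero_iff.2 hx), sub_add_cancel]

variable {E : Type*} [NormedAddCommGroup E] [InnerProductSpace ℝ E] {p : ℝ}

lemma abs_inner_dualityMap_le (hp0 : 0 ≤ p) (x y : E) :
    |inner ℝ (dualityMap p x) y| ≤ ‖x‖ ^ (1 + p) + ‖y‖ ^ (1 + p) :=
  calc |inner ℝ (dualityMap p x) y| ≤ ‖dualityMap p x‖ * ‖y‖ := abs_real_inner_le_norm _ _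
    _ ≤ ‖x‖ ^ p * ‖y‖ := mul_le_mul_of_nonneg_right (norm_dualityMap_le p x) (norm_nonneg y)
    _ ≤ ‖x‖ ^ (1 + p) + ‖y‖ ^ (1 + p) :=
      rpow_mul_le_rpow_add_rpow (norm_nonneg x) (norm_nonneg y) hp0

lemma inner_dualityMap_self (hp : 1 + p ≠ 0) (x : E) :
    inner ℝ (dualityMap p x) x = ‖x‖ ^ (1 + p) := by
  rcases eq_or_ne x 0 with rfl | hx
  · simp [Real.zero_rpow hp]
  · rw [dualityMap, real_inner_smul_left, real_inner_self_eq_norm_sq,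
      ← Real.rpow_add_natCast (norm_ne_zero_iff.2 hx)]
    congr 1
    push_cast
    ring

lemma inner_dualityMap_sub_dualityMap_le (hp0 : 0 < p) (hp1 : p ≤ 1) (x y : E) :
    inner ℝ (dualityMap p x - dualityMap p y) (x - y) ≤ 2 ^ (1 - p) * ‖x - y‖ ^ (1 + p) := by
  refine le_of_eq_of_le ?_ (rpow_sub_cosine_rule_le (norm_nonneg x) (norm_nonneg y) hp0 hp1
    (abs_norm_sub_norm_le x y) (norm_sub_le x y))
  have hxy : inner ℝ x y = (‖x‖ ^ 2 + ‖y‖ ^ 2 - ‖x - y‖ ^ 2) / 2 := by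
    linarith [norm_sub_sq_real x y]
  rw [inner_sub_left, inner_sub_right, inner_sub_right, inner_dualityMap_self (by positivity),
    inner_dualityMap_self (by positivity), ← hxy]
  simp only [dualityMap, real_inner_smul_left, real_inner_comm x y]
  ring

lemma hasDerivAt_norm_add_smul_rpow (hp0 : 0 < p) (x y : E) (t : ℝ) :
    HasDerivAt (fun s : ℝ ↦ ‖x + s • y‖ ^ (1 + p))
      ((1 + p) * inner ℝ (dualityMap p (x + t • y)) y) t := by
  have hline : HasDerivAt (fun s : ℝ ↦ x + s • y) y t := by
    simpa using ((hasDerivAt_id t).smul_const y).const_add x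
  refine ((hasFDerivAt_norm_rpow (x + t • y) (by linarith : 1 < 1 + p)).comp_hasDerivAt t
    hline).congr_deriv ?_
  rw [dualityMap, real_inner_smul_left, show 1 + p - 2 = p - 1 by ring]
  simp only [smul_apply, innerSL_apply_apply, smul_eq_mul, mul_assoc]

lemma norm_add_le_norm_add_inner_dualityMap_zero (x y : E) :
    ‖x + y‖ ≤ ‖x‖ + inner ℝ (dualityMap 0 x) y + 2 * ‖y‖ := by
  have hinner : -‖y‖ ≤ inner ℝ (dualityMap 0 x) y := by
    refine neg_le_of_abs_le ((abs_real_inner_le_norm _ _).trans ?_)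
    exact mul_le_of_le_one_left (norm_nonneg y) (by simpa using norm_dualityMap_le 0 x)
  linarith [norm_add_le x y]

lemma norm_add_rpow_le_add_inner_dualityMap (hp0 : 0 ≤ p) (hp1 : p ≤ 1) (x y : E) :
    ‖x + y‖ ^ (1 + p) ≤ ‖x‖ ^ (1 + p) + (1 + p) * inner ℝ (dualityMap p x) y +
      2 ^ (1 - p) * ‖y‖ ^ (1 + p) := by
  rcases hp0.eq_or_lt with rfl | hp0
  · simpa using norm_add_le_norm_add_inner_dualityMap_zero x y
  let φ : ℝ → ℝ := fun t ↦ (1 + p) * inner ℝ (dualityMap p x) y * t +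
    2 ^ (1 - p) * ‖y‖ ^ (1 + p) * t ^ (1 + p) - ‖x + t • y‖ ^ (1 + p)
  let φ' : ℝ → ℝ := fun t ↦ (1 + p) * inner ℝ (dualityMap p x) y +
    2 ^ (1 - p) * ‖y‖ ^ (1 + p) * ((1 + p) * t ^ p) -
      (1 + p) * inner ℝ (dualityMap p (x + t • y)) y
  have hφ (t : ℝ) : HasDerivAt φ (φ' t) t := by
    have hlin := hasDerivAt_mul_const (x := t) ((1 + p) * inner ℝ (dualityMap p x) y)
    have hpow := (Real.hasDerivAt_rpow_const (x := t) (p := 1 + p) (.inr (by linarith))).const_mul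
      (2 ^ (1 - p) * ‖y‖ ^ (1 + p))
    simp only [mul_comm _ ((1 + p) * inner ℝ (dualityMap p x) y), add_sub_cancel_left] at hlin hpow
    exact (hlin.add hpow).sub (hasDerivAt_norm_add_smul_rpow hp0 x y t)
  have hφ'_nonneg {t : ℝ} (ht : 0 < t) : 0 ≤ φ' t := by
    have hmono := inner_dualityMap_sub_dualityMap_le hp0 hp1 (x + t • y) x
    rw [add_sub_cancel_left, real_inner_smul_right, norm_smul, Real.norm_of_nonneg ht.le,
      Real.mul_rpow ht.le (norm_nonneg y), Real.rpow_one_add' ht.le (by linarith),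
      inner_sub_left] at hmono
    have hdiv : inner ℝ (dualityMap p (x + t • y)) y - inner ℝ (dualityMap p x) y ≤
        2 ^ (1 - p) * ‖y‖ ^ (1 + p) * t ^ p :=
      le_of_mul_le_mul_left (by linarith) ht
    linear_combination (1 + p) * hdiv
  have hφ_mono : MonotoneOn φ (Set.Ici 0) :=
    monotoneOn_of_hasDerivWithinAt_nonneg (convex_Ici 0)
      (fun t _ ↦ (hφ t).continuousAt.continuousWithinAt) (fun t _ ↦ (hφ t).hasDerivWithinAt)
      fun t ht ↦ hφ'_nonneg (by simpa using ht)
  have hφ01 : φ 0 ≤ φ 1 := hφ_mono Set.self_mem_Ici (Set.mem_Ici.2 zero_le_one) zero_le_one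
  simp only [φ, zero_smul, one_smul, mul_zero, mul_one, add_zero, Real.one_rpow,
    Real.zero_rpow (by linarith : 1 + p ≠ 0)] at hφ01
  linarith

end DualityMap

section Martingale

variable {Ω : Type*} {m0 : MeasurableSpace Ω} {μ : Measure Ω}

lemma integrable_norm_sub_rpow {E : Type*} [NormedAddCommGroup E] {q : ℝ} (hq : 0 < q)
    {f g : Ω → E} (hf : AEStronglyMeasurable f μ) (hg : AEStronglyMeasurable g μ)
    (hf_int : Integrable (fun ω ↦ ‖f ω‖ ^ q) μ) (hg_int : Integrable (fun ω ↦ ‖g ω‖ ^ q) μ) :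
    Integrable (fun ω ↦ ‖f ω - g ω‖ ^ q) μ := by
  have hiff {h : Ω → E} (hh : AEStronglyMeasurable h μ) :
      Integrable (fun ω ↦ ‖h ω‖ ^ q) μ ↔ MemLp h (ENNReal.ofReal q) μ := by
    simpa [ENNReal.toReal_ofReal hq.le] using
      integrable_norm_rpow_iff hh (ENNReal.ofReal_pos.2 hq).ne' ENNReal.ofReal_ne_top
  exact (hiff (hf.sub hg)).2 (((hiff hf).1 hf_int).sub ((hiff hg).1 hg_int))

lemma integral_bilin_martingale_sub_eq_zero {ι : Type*} [Preorder ι] {ℱ : Filtration ι m0}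
    [SigmaFiniteFiltration μ ℱ] {E F G : Type*} [NormedAddCommGroup E] [NormedSpace ℝ E]
    [CompleteSpace E] [NormedAddCommGroup F] [NormedSpace ℝ F] [NormedAddCommGroup G]
    [NormedSpace ℝ G] [CompleteSpace G] (B : F →L[ℝ] E →L[ℝ] G) {S : ι → Ω → E}
    (hS : Martingale S ℱ μ) {i j : ι} (hij : i ≤ j) {Y : Ω → F} (hY : StronglyMeasurable[ℱ i] Y)
    (hint : Integrable (fun ω ↦ B (Y ω) (S j ω - S i ω)) μ) :
    ∫ ω, B (Y ω) (S j ω - S i ω) ∂μ = 0 := by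
  have hincr : μ[S j - S i | ℱ i] =ᵐ[μ] 0 := by
    filter_upwards [condExp_sub (hS.integrable j) (hS.integrable i) (ℱ i), hS.condExp_ae_eq hij,
      hS.condExp_ae_eq (le_refl i)] with ω hsub hj hi
    rw [hsub, Pi.sub_apply, hj, hi, sub_self, Pi.zero_apply]
  have hpull := condExp_bilin_of_stronglyMeasurable_left B hY (g := S j - S i) hint
    ((hS.integrable j).sub (hS.integrable i))
  rw [← integral_condExp (ℱ.le i)]
  refine integral_eq_zero_of_ae ?_
  filter_upwards [hpull, hincr] with ω hpull hincr
  exact hpull.trans (by rw [hincr, Pi.zero_apply, map_zero, Pi.zero_apply])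

variable {E : Type*} [NormedAddCommGroup E] [InnerProductSpace ℝ E]

lemma stronglyMeasurable_dualityMap_comp {m : MeasurableSpace Ω} (p : ℝ) {f : Ω → E}
    (hf : StronglyMeasurable[m] f) : StronglyMeasurable[m] fun ω ↦ dualityMap p (f ω) :=
  (hf.norm.measurable.pow_const (p - 1)).stronglyMeasurable.smul hf

variable [CompleteSpace E] {p : ℝ}

lemma integral_norm_rpow_martingale_le {ι : Type*} [Preorder ι] {ℱ : Filtration ι m0}
    [SigmaFiniteFiltration μ ℱ] (hp0 : 0 ≤ p) (hp1 : p ≤ 1) {S : ι → Ω → E}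
    (hS : Martingale S ℱ μ) {i j : ι} (hij : i ≤ j)
    (hi : Integrable (fun ω ↦ ‖S i ω‖ ^ (1 + p)) μ)
    (hj : Integrable (fun ω ↦ ‖S j ω‖ ^ (1 + p)) μ) :
    ∫ ω, ‖S j ω‖ ^ (1 + p) ∂μ ≤
      ∫ ω, ‖S i ω‖ ^ (1 + p) ∂μ + 2 ^ (1 - p) * ∫ ω, ‖S j ω - S i ω‖ ^ (1 + p) ∂μ := by
  have hi_meas := (hS.integrable i).aestronglyMeasurable
  have hj_meas := (hS.integrable j).aestronglyMeasurable
  have hincr := integrable_norm_sub_rpow (by positivity) hj_meas hi_meas hj hi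
  have hD_meas := stronglyMeasurable_dualityMap_comp p (hS.stronglyMeasurable i)
  have hinner : Integrable (fun ω ↦ inner ℝ (dualityMap p (S i ω)) (S j ω - S i ω)) μ :=
    (hi.add hincr).mono'
      ((hD_meas.mono (ℱ.le i)).aestronglyMeasurable.inner (hj_meas.sub hi_meas))
      (.of_forall fun ω ↦ abs_inner_dualityMap_le hp0 _ _)
  have hlin : Integrable (fun ω ↦ ‖S i ω‖ ^ (1 + p) +
      (1 + p) * inner ℝ (dualityMap p (S i ω)) (S j ω - S i ω)) μ :=
    hi.add (hinner.const_mul _)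
  have horth : ∫ ω, inner ℝ (dualityMap p (S i ω)) (S j ω - S i ω) ∂μ = 0 :=
    integral_bilin_martingale_sub_eq_zero (innerSL ℝ) hS hij hD_meas hinner
  calc ∫ ω, ‖S j ω‖ ^ (1 + p) ∂μ
      ≤ ∫ ω, (‖S i ω‖ ^ (1 + p) + (1 + p) * inner ℝ (dualityMap p (S i ω)) (S j ω - S i ω) +
          2 ^ (1 - p) * ‖S j ω - S i ω‖ ^ (1 + p)) ∂μ :=
        integral_mono hj (hlin.add (hincr.const_mul _)) fun ω ↦ by
          simpa using norm_add_rpow_le_add_inner_dualityMap hp0 hp1 (S i ω) (S j ω - S i ω)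
    _ = _ := by
        rw [integral_add hlin (hincr.const_mul _), integral_add hi (hinner.const_mul _),
          integral_const_mul, integral_const_mul, horth, mul_zero, add_zero]

theorem martingale_moment_bound_general {ℱ : Filtration ℕ m0} [SigmaFiniteFiltration μ ℱ]
    (hp : p ∈ Set.Icc (0 : ℝ) 1) {S : ℕ → Ω → E} (hS : Martingale S ℱ μ)
    (hint : ∀ t, Integrable (fun ω ↦ ‖S t ω‖ ^ (1 + p)) μ) (t : ℕ) :
    ∫ ω, ‖S t ω‖ ^ (1 + p) ∂μ ≤ ∫ ω, ‖S 0 ω‖ ^ (1 + p) ∂μ +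
      2 ^ (1 - p) * ∑ i ∈ Finset.range t, ∫ ω, ‖S (i + 1) ω - S i ω‖ ^ (1 + p) ∂μ := by
  induction t with
  | zero => simp
  | succ t ih =>
    rw [Finset.sum_range_succ, mul_add, ← add_assoc]
    exact (integral_norm_rpow_martingale_le hp.1 hp.2 hS t.le_succ (hint t) (hint (t + 1))).trans
      (add_le_add_left ih _)

end Martingale

/-- for `p ∈ [0,1]` and an `ℝ^n`-valued martingale `{S_t}` (Euclidean norm)
with `S_0 = 0` and `E[|S_t|^{1+p}] < ∞` for every `t`, setting `X_i = S_i − S_{i−1}`,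
one has `E[|S_t|^{1+p}] ≤ 2^{1−p} n^{1−(1+p)/2} Σ_{i=1}^t E[|X_i|^{1+p}]`. -/
theorem martingale_moment_bound
    {n : ℕ} {Ω : Type} {m0 : MeasurableSpace Ω} {P : Measure Ω} [IsProbabilityMeasure P]
    (ℱ : Filtration ℕ m0) (p : ℝ) (hp : p ∈ Set.Icc (0 : ℝ) 1)
    (S : ℕ → Ω → EuclideanSpace ℝ (Fin n)) (hmart : Martingale S ℱ P)
    (hS0 : ∀ ω, S 0 ω = 0)
    (hint : ∀ t, Integrable (fun ω => ‖S t ω‖ ^ (1 + p)) P) (t : ℕ) :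
    ∫ ω, ‖S t ω‖ ^ (1 + p) ∂P ≤
      2 ^ (1 - p) * (n : ℝ) ^ (1 - (1 + p) / 2) *
        ∑ i ∈ Finset.range t, ∫ ω, ‖S (i + 1) ω - S i ω‖ ^ (1 + p) ∂P := by
  have hzero : (0 : ℝ) ^ (1 + p) = 0 := Real.zero_rpow (by linarith [hp.1])
  rcases n.eq_zero_or_pos with rfl | hn
  · simp [Subsingleton.elim (_ : EuclideanSpace ℝ (Fin 0)) 0, hzero]
  have hdim : 1 ≤ (n : ℝ) ^ (1 - (1 + p) / 2) :=
    Real.one_le_rpow (mod_cast hn) (by linarith [hp.2])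
  have hbound := martingale_moment_bound_general hp hmart hint t
  simp only [hS0, norm_zero, hzero, integral_zero, zero_add] at hbound
  refine hbound.trans (mul_le_mul_of_nonneg_right ?_ (by positivity))
  exact le_mul_of_one_le_right (by positivity) hdim
end

section
/- Let p ∈ [1, 2]. For any vectors x, y ∈ ℝ^n, ‖x + y‖_p^p ≤ ‖x‖_p^p + 4‖y‖_p^p + p · y⊤ x^{⟨p−1⟩}. -/
open Matrix

/-- The signed entrywise power `v^{⟨q⟩}`: `(v^{⟨q⟩})_i = sgn(v_i)|v_i|^q`. -/
noncomputable def signedPow {n : ℕ} (q : ℝ) (v : Fin n → ℝ) : Fin n → ℝ :=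
  fun i => Real.sign (v i) * |v i| ^ q

/-- The `p`-norm `‖v‖_p = (Σ_i |v_i|^p)^{1/p}` on `ℝ^n`. -/
noncomputable def pNorm {n : ℕ} (p : ℝ) (v : Fin n → ℝ) : ℝ :=
  (∑ i, |v i| ^ p) ^ (1 / p)

/-!
The tangent line to the convex function `t ↦ |t| ^ p` at `a + b`, evaluated at `a`, gives
`|a + b| ^ p ≤ |a| ^ p + p b (a + b)^{⟨p - 1⟩}`. Replacing `(a + b)^{⟨p - 1⟩}` by
`a^{⟨p - 1⟩}` costs at most `p |b| · 2|b| ^ (p - 1) = 2p |b| ^ p`, because `t ↦ t^{⟨q⟩}` is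
`q`-Hölder with constant `2` for `q ∈ [0, 1]`; this is where `p ≤ 2` enters. The constant `4` of the
theorem is the bound `2p ≤ 4`, and the coordinates are treated separately.
-/

/-- The scalar signed power `a^{⟨q⟩} = sgn(a)|a|^q`, of which `signedPow` is the entrywise version.
At `a = 0` it vanishes for every `q`, including `q = 0`. -/
noncomputable def signedRpow (q a : ℝ) : ℝ :=
  Real.sign a * |a| ^ q

lemma signedRpow_of_pos (q : ℝ) {a : ℝ} (ha : 0 < a) : signedRpow q a = a ^ q := by
  rw [signedRpow, Real.sign_of_pos ha, abs_of_pos ha, one_mul]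

lemma signedRpow_neg (q a : ℝ) : signedRpow q (-a) = -signedRpow q a := by
  rw [signedRpow, signedRpow, Real.sign_neg, abs_neg, neg_mul]

lemma abs_signedRpow_le (q a : ℝ) : |signedRpow q a| ≤ |a| ^ q := by
  have hsign : |Real.sign a| ≤ 1 := by
    rcases Real.sign_apply_eq a with h | h | h <;> simp [h]
  calc |signedRpow q a| = |Real.sign a| * |a| ^ q := by
        rw [signedRpow, abs_mul, Real.abs_rpow_of_nonneg (abs_nonneg a), abs_abs]
    _ ≤ |a| ^ q := mul_le_of_le_one_left (by positivity) hsign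

lemma abs_mul_abs_rpow_sub_one {p : ℝ} (hp : p ≠ 0) (a : ℝ) : |a| * |a| ^ (p - 1) = |a| ^ p := by
  rw [← Real.rpow_one_add' (abs_nonneg a) (by simpa using hp), add_sub_cancel]

lemma mul_signedRpow_sub_one {p : ℝ} (hp : p ≠ 0) (a : ℝ) :
    a * signedRpow (p - 1) a = |a| ^ p := by
  have hsign : a * Real.sign a = |a| := by
    rcases lt_trichotomy a 0 with ha | rfl | ha
    · rw [Real.sign_of_neg ha, abs_of_neg ha, mul_neg_one]
    · simp
    · rw [Real.sign_of_pos ha, abs_of_pos ha, mul_one]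
  rw [signedRpow, ← mul_assoc, hsign, abs_mul_abs_rpow_sub_one hp]

lemma abs_rpow_sub_rpow_le {q a b : ℝ} (hq₀ : 0 ≤ q) (hq₁ : q ≤ 1) (ha : 0 ≤ a) (hb : 0 ≤ b) :
    |a ^ q - b ^ q| ≤ |a - b| ^ q := by
  wlog hba : b ≤ a generalizing a b
  · simpa only [abs_sub_comm] using this hb ha (le_of_not_ge hba)
  have hmono : b ^ q ≤ a ^ q := Real.rpow_le_rpow hb hba hq₀
  have hsub : (a - b + b) ^ q ≤ (a - b) ^ q + b ^ q :=
    Real.rpow_add_le_add_rpow (sub_nonneg.2 hba) hb hq₀ hq₁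
  rw [sub_add_cancel] at hsub
  rw [abs_of_nonneg (sub_nonneg.2 hmono), abs_of_nonneg (sub_nonneg.2 hba)]
  exact sub_le_iff_le_add.2 hsub

lemma abs_signedRpow_sub_le_of_mul_pos {q a b : ℝ} (hq₀ : 0 ≤ q) (hq₁ : q ≤ 1)
    (hab : 0 < a * b) : |signedRpow q a - signedRpow q b| ≤ |a - b| ^ q := by
  wlog ha : 0 < a generalizing a b
  · have hneg := this (a := -a) (b := -b) (by rwa [neg_mul_neg])
      (neg_pos.2 <| lt_of_le_of_ne (not_lt.1 ha) (left_ne_zero_of_mul hab.ne'))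
    rwa [signedRpow_neg, signedRpow_neg, neg_sub_neg, neg_sub_neg, abs_sub_comm,
      abs_sub_comm b] at hneg
  have hb : 0 < b := (mul_pos_iff_of_pos_left ha).1 hab
  rw [signedRpow_of_pos q ha, signedRpow_of_pos q hb]
  exact abs_rpow_sub_rpow_le hq₀ hq₁ ha.le hb.le

lemma abs_signedRpow_sub_le_of_mul_nonpos {q a b : ℝ} (hq : 0 ≤ q) (hab : a * b ≤ 0) :
    |signedRpow q a - signedRpow q b| ≤ 2 * |a - b| ^ q := by
  have ha : |a| ≤ |a - b| := sq_le_sq.1 (by nlinarith [sq_nonneg b])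
  have hb : |b| ≤ |a - b| := sq_le_sq.1 (by nlinarith [sq_nonneg a])
  calc |signedRpow q a - signedRpow q b|
      ≤ |signedRpow q a| + |signedRpow q b| := abs_sub _ _
    _ ≤ |a| ^ q + |b| ^ q := add_le_add (abs_signedRpow_le q a) (abs_signedRpow_le q b)
    _ ≤ |a - b| ^ q + |a - b| ^ q := by gcongr
    _ = 2 * |a - b| ^ q := (two_mul _).symm

lemma abs_signedRpow_sub_le {q : ℝ} (hq₀ : 0 ≤ q) (hq₁ : q ≤ 1) (a b : ℝ) :
    |signedRpow q a - signedRpow q b| ≤ 2 * |a - b| ^ q := by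
  rcases lt_or_ge 0 (a * b) with hab | hab
  · exact (abs_signedRpow_sub_le_of_mul_pos hq₀ hq₁ hab).trans
      (le_mul_of_one_le_left (by positivity) one_le_two)
  · exact abs_signedRpow_sub_le_of_mul_nonpos hq₀ hab

lemma mul_rpow_sub_one_le {p a s : ℝ} (hp : 1 ≤ p) (ha : 0 ≤ a) (hs : 0 ≤ s) :
    p * (a * s ^ (p - 1)) ≤ a ^ p + (p - 1) * s ^ p := by
  have hp₀ : 0 < p := by linarith
  -- Young's inequality as weighted AM-GM, which unlike the conjugate-exponent form covers `p = 1`.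
  have young := Real.geom_mean_le_arith_mean2_weighted (w₁ := 1 / p) (w₂ := (p - 1) / p)
    (by positivity) (div_nonneg (by linarith) hp₀.le)
    (Real.rpow_nonneg ha p) (Real.rpow_nonneg hs p) (by field_simp; ring)
  rw [← Real.rpow_mul ha, ← Real.rpow_mul hs, mul_one_div_cancel hp₀.ne',
    mul_div_cancel₀ _ hp₀.ne', Real.rpow_one] at young
  calc p * (a * s ^ (p - 1)) ≤ p * (1 / p * a ^ p + (p - 1) / p * s ^ p) := by gcongr
    _ = a ^ p + (p - 1) * s ^ p := by field_simp

lemma abs_rpow_add_mul_signedRpow_le {p : ℝ} (hp : 1 ≤ p) (s a : ℝ) :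
    |s| ^ p + p * ((a - s) * signedRpow (p - 1) s) ≤ |a| ^ p := by
  have hself : s * signedRpow (p - 1) s = |s| ^ p := mul_signedRpow_sub_one (by linarith) s
  have hprod : a * signedRpow (p - 1) s ≤ |a| * |s| ^ (p - 1) :=
    calc a * signedRpow (p - 1) s ≤ |a| * |signedRpow (p - 1) s| := by
          rw [← abs_mul]; exact le_abs_self _
      _ ≤ |a| * |s| ^ (p - 1) := by gcongr; exact abs_signedRpow_le _ _
  calc |s| ^ p + p * ((a - s) * signedRpow (p - 1) s)
      = p * (a * signedRpow (p - 1) s) - (p - 1) * |s| ^ p := by rw [sub_mul, hself]; ring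
    _ ≤ p * (|a| * |s| ^ (p - 1)) - (p - 1) * |s| ^ p := by gcongr
    _ ≤ |a| ^ p := by linarith [mul_rpow_sub_one_le hp (abs_nonneg a) (abs_nonneg s)]

lemma abs_add_rpow_le {p : ℝ} (hp : p ∈ Set.Icc (1 : ℝ) 2) (a b : ℝ) :
    |a + b| ^ p ≤ |a| ^ p + 2 * p * |b| ^ p + p * (b * signedRpow (p - 1) a) := by
  obtain ⟨hp₁, hp₂⟩ := hp
  have tangent : |a + b| ^ p ≤ |a| ^ p + p * (b * signedRpow (p - 1) (a + b)) := by
    have h := abs_rpow_add_mul_signedRpow_le hp₁ (a + b) a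
    rw [sub_add_cancel_left] at h
    linarith
  have holder : |signedRpow (p - 1) (a + b) - signedRpow (p - 1) a| ≤ 2 * |b| ^ (p - 1) := by
    simpa only [add_sub_cancel_left] using
      abs_signedRpow_sub_le (q := p - 1) (by linarith) (by linarith) (a + b) a
  have error : b * (signedRpow (p - 1) (a + b) - signedRpow (p - 1) a) ≤ 2 * |b| ^ p :=
    calc b * (signedRpow (p - 1) (a + b) - signedRpow (p - 1) a)
        ≤ |b| * |signedRpow (p - 1) (a + b) - signedRpow (p - 1) a| := by
          rw [← abs_mul]; exact le_abs_self _
      _ ≤ |b| * (2 * |b| ^ (p - 1)) := by gcongr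
      _ = 2 * |b| ^ p := by rw [mul_left_comm, abs_mul_abs_rpow_sub_one (by linarith)]
  calc |a + b| ^ p
      ≤ |a| ^ p + p * (b * signedRpow (p - 1) (a + b)) := tangent
    _ = |a| ^ p + p * (b * (signedRpow (p - 1) (a + b) - signedRpow (p - 1) a))
        + p * (b * signedRpow (p - 1) a) := by ring
    _ ≤ |a| ^ p + p * (2 * |b| ^ p) + p * (b * signedRpow (p - 1) a) := by gcongr
    _ = |a| ^ p + 2 * p * |b| ^ p + p * (b * signedRpow (p - 1) a) := by ring

lemma pNorm_rpow_self {n : ℕ} {p : ℝ} (hp : p ≠ 0) (v : Fin n → ℝ) :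
    pNorm p v ^ p = ∑ i, |v i| ^ p := by
  rw [pNorm, ← Real.rpow_mul (by positivity), one_div_mul_cancel hp, Real.rpow_one]

theorem pnorm_pow_add_le_general {ι : Type*} (s : Finset ι) {p : ℝ} (hp : p ∈ Set.Icc (1 : ℝ) 2)
    (x y : ι → ℝ) :
    ∑ i ∈ s, |x i + y i| ^ p ≤ ∑ i ∈ s, |x i| ^ p + 2 * p * ∑ i ∈ s, |y i| ^ p
      + p * ∑ i ∈ s, y i * signedRpow (p - 1) (x i) := by
  simp only [Finset.mul_sum, ← Finset.sum_add_distrib]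
  exact Finset.sum_le_sum fun i _ ↦ abs_add_rpow_le hp (x i) (y i)

/-- for `p ∈ [1,2]` and `x, y ∈ ℝ^n`,
`‖x + y‖_p^p ≤ ‖x‖_p^p + 4‖y‖_p^p + p · y⊤ x^{⟨p−1⟩}`. -/
theorem pnorm_pow_add_le {n : ℕ} (p : ℝ) (hp : p ∈ Set.Icc (1 : ℝ) 2) (x y : Fin n → ℝ) :
    pNorm p (x + y) ^ p ≤ pNorm p x ^ p + 4 * pNorm p y ^ p + p * (y ⬝ᵥ signedPow (p - 1) x) := by
  simp only [pNorm_rpow_self (zero_lt_one.trans_le hp.1).ne']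
  have hconst : 2 * p ≤ 4 := by linarith [hp.2]
  calc ∑ i, |x i + y i| ^ p
      ≤ ∑ i, |x i| ^ p + 2 * p * ∑ i, |y i| ^ p + p * ∑ i, y i * signedRpow (p - 1) (x i) :=
        pnorm_pow_add_le_general Finset.univ hp x y
    _ ≤ ∑ i, |x i| ^ p + 4 * ∑ i, |y i| ^ p + p * ∑ i, y i * signedRpow (p - 1) (x i) := by
        gcongr
end

section
/- For every p ∈ [1, 2] and every real number a, the inequality |1 + a|^p ≤ 1 + ap + 4|a|^p holds; consequently, for any real x, y and p ∈ [1, 2], |x + y|^p ≤ |x|^p + p·y·|x|^{p−1}·sgn(x) + 4|y|^p. -/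
/-!
The constant `4` can be lowered to `2`, which is optimal, as `p = 1` and `a → -∞` show.

For `|a| ≤ 1`, factor `(1 + a) ^ p = (1 + a) * (1 + a) ^ (p - 1)` and apply Bernoulli's inequality
with exponent `p - 1 ∈ [0, 1]`: the error term is at most `a ^ 2 ≤ |a| ^ p`. For `1 ≤ a`, convexity
of the `p`-th power gives `(1 + a) ^ p ≤ 2 * (1 + a ^ p)`. For `a = -b` with `1 ≤ b`, one copy of
`b ^ p` dominates `(b - 1) ^ p`, and Bernoulli's inequality makes the other one absorb `p * b - 1`.
The inequality in `x` and `y` is the one in `a = y / x` multiplied by `|x| ^ p`.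
-/

theorem one_add_rpow_le_one_add_mul_add_mul_sq {p a : ℝ} (hp : p ∈ Set.Icc (1 : ℝ) 2)
    (ha : -1 ≤ a) : (1 + a) ^ p ≤ 1 + a * p + (p - 1) * a ^ 2 := by
  obtain ⟨hp1, hp2⟩ := hp
  have ha' : 0 ≤ 1 + a := by linarith
  have bernoulli : (1 + a) ^ (p - 1) ≤ 1 + (p - 1) * a :=
    rpow_one_add_le_one_add_mul_self ha (by linarith) (by linarith)
  calc (1 + a) ^ p
    _ = (1 + a) * (1 + a) ^ (p - 1) := by
      rw [← Real.rpow_one_add' ha' (by linarith), add_sub_cancel]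
    _ ≤ (1 + a) * (1 + (p - 1) * a) := by gcongr
    _ = 1 + a * p + (p - 1) * a ^ 2 := by ring

theorem sq_le_abs_rpow {p a : ℝ} (hp : p ∈ Set.Icc (0 : ℝ) 2) (ha : |a| ≤ 1) :
    a ^ 2 ≤ |a| ^ p := by
  rw [← sq_abs, ← Real.rpow_two]
  exact Real.rpow_le_rpow_of_exponent_ge' (abs_nonneg a) ha hp.1 hp.2

theorem abs_one_add_rpow_le_of_abs_le_one {p a : ℝ} (hp : p ∈ Set.Icc (1 : ℝ) 2)
    (ha : |a| ≤ 1) : |1 + a| ^ p ≤ 1 + a * p + |a| ^ p := by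
  have ha' : -1 ≤ a := (abs_le.mp ha).1
  calc |1 + a| ^ p
    _ = (1 + a) ^ p := by rw [abs_of_nonneg (by linarith)]
    _ ≤ 1 + a * p + (p - 1) * a ^ 2 := one_add_rpow_le_one_add_mul_add_mul_sq hp ha'
    _ ≤ 1 + a * p + a ^ 2 := by
      gcongr
      exact mul_le_of_le_one_left (sq_nonneg a) (by linarith [hp.2])
    _ ≤ 1 + a * p + |a| ^ p := by
      gcongr
      exact sq_le_abs_rpow ⟨by linarith [hp.1], hp.2⟩ ha

theorem add_rpow_le_two_rpow_mul_rpow_add_rpow {p x y : ℝ} (hp : 1 ≤ p) (hx : 0 ≤ x)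
    (hy : 0 ≤ y) : (x + y) ^ p ≤ 2 ^ (p - 1) * (x ^ p + y ^ p) := by
  lift x to NNReal using hx
  lift y to NNReal using hy
  exact_mod_cast NNReal.rpow_add_le_mul_rpow_add_rpow x y hp

theorem one_add_rpow_le_of_one_le {p a : ℝ} (hp : p ∈ Set.Icc (1 : ℝ) 2) (ha : 1 ≤ a) :
    (1 + a) ^ p ≤ 1 + a * p + 2 * a ^ p := by
  have two_rpow_le : (2 : ℝ) ^ (p - 1) ≤ 2 :=
    Real.rpow_le_self_of_one_le one_le_two (by linarith [hp.2])
  calc (1 + a) ^ p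
    _ ≤ 2 ^ (p - 1) * (1 ^ p + a ^ p) :=
      add_rpow_le_two_rpow_mul_rpow_add_rpow hp.1 zero_le_one (by linarith)
    _ ≤ 2 * (1 ^ p + a ^ p) := by gcongr
    _ = 1 + 1 + 2 * a ^ p := by rw [Real.one_rpow]; ring
    _ ≤ 1 + a * p + 2 * a ^ p := by
      gcongr
      exact one_le_mul_of_one_le_of_one_le ha hp.1

theorem sub_one_rpow_le_of_one_le {p b : ℝ} (hp : p ∈ Set.Icc (1 : ℝ) 2) (hb : 1 ≤ b) :
    (b - 1) ^ p ≤ 1 - b * p + 2 * b ^ p := by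
  have monotone : (b - 1) ^ p ≤ b ^ p :=
    Real.rpow_le_rpow (by linarith) (by linarith) (by linarith [hp.1])
  have bernoulli : 1 + p * (b - 1) ≤ b ^ p := by
    simpa only [add_sub_cancel] using
      one_add_mul_self_le_rpow_one_add (s := b - 1) (by linarith) hp.1
  linarith [hp.2]

theorem abs_one_add_rpow_le {p : ℝ} (hp : p ∈ Set.Icc (1 : ℝ) 2) (a : ℝ) :
    |1 + a| ^ p ≤ 1 + a * p + 2 * |a| ^ p := by
  rcases le_total |a| 1 with small | large
  · linarith [abs_one_add_rpow_le_of_abs_le_one hp small, Real.rpow_nonneg (abs_nonneg a) p]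
  rcases le_abs'.mp large with ha | ha
  · rw [abs_of_nonpos (by linarith : 1 + a ≤ 0), abs_of_nonpos (by linarith : a ≤ 0)]
    convert sub_one_rpow_le_of_one_le hp (by linarith : 1 ≤ -a) using 2 <;> ring
  · rw [abs_of_nonneg (by linarith : 0 ≤ 1 + a), abs_of_nonneg (by linarith : 0 ≤ a)]
    exact one_add_rpow_le_of_one_le hp ha

theorem abs_mul_rpow (x y p : ℝ) : |x * y| ^ p = |x| ^ p * |y| ^ p := by
  rw [abs_mul, Real.mul_rpow (abs_nonneg x) (abs_nonneg y)]

theorem mul_sign_eq_abs (x : ℝ) : x * Real.sign x = |x| := by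
  rcases lt_trichotomy x 0 with neg | rfl | pos
  · rw [Real.sign_of_neg neg, abs_of_neg neg, mul_neg_one]
  · rw [zero_mul, abs_zero]
  · rw [Real.sign_of_pos pos, abs_of_pos pos, mul_one]

theorem mul_abs_rpow_sub_one_mul_sign {x : ℝ} (hx : x ≠ 0) (p : ℝ) :
    x * |x| ^ (p - 1) * Real.sign x = |x| ^ p := by
  rw [mul_right_comm, mul_sign_eq_abs, Real.rpow_sub_one (abs_ne_zero.mpr hx),
    mul_div_cancel₀ _ (abs_ne_zero.mpr hx)]

theorem abs_add_rpow_le_of_forall_abs_one_add_rpow_le {p C : ℝ} (hC : 1 ≤ C)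
    (h : ∀ a : ℝ, |1 + a| ^ p ≤ 1 + a * p + C * |a| ^ p) (x y : ℝ) :
    |x + y| ^ p ≤ |x| ^ p + p * y * |x| ^ (p - 1) * Real.sign x + C * |y| ^ p := by
  rcases eq_or_ne x 0 with rfl | hx
  · have x_term_nonneg : 0 ≤ |(0 : ℝ)| ^ p := by positivity
    have y_term_le : |y| ^ p ≤ C * |y| ^ p := le_mul_of_one_le_left (by positivity) hC
    rw [zero_add, Real.sign_zero, mul_zero]
    linarith
  obtain ⟨a, rfl⟩ : ∃ a, y = x * a := ⟨y / x, (mul_div_cancel₀ y hx).symm⟩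
  calc |x + x * a| ^ p
    _ = |x| ^ p * |1 + a| ^ p := by rw [← abs_mul_rpow, mul_one_add]
    _ ≤ |x| ^ p * (1 + a * p + C * |a| ^ p) := by
      gcongr
      exact h a
    _ = |x| ^ p + p * a * |x| ^ p + C * (|x| ^ p * |a| ^ p) := by ring
    _ = |x| ^ p + p * a * (x * |x| ^ (p - 1) * Real.sign x) + C * |x * a| ^ p := by
      rw [mul_abs_rpow_sub_one_mul_sign hx, abs_mul_rpow]
    _ = |x| ^ p + p * (x * a) * |x| ^ (p - 1) * Real.sign x + C * |x * a| ^ p := by ring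

theorem abs_pow_add_ineq_general (p : ℝ) (hp : p ∈ Set.Icc (1 : ℝ) 2) :
    (∀ a : ℝ, |1 + a| ^ p ≤ 1 + a * p + 2 * |a| ^ p) ∧
    (∀ x y : ℝ, |x + y| ^ p ≤ |x| ^ p + p * y * |x| ^ (p - 1) * Real.sign x + 2 * |y| ^ p) :=
  ⟨abs_one_add_rpow_le hp,
    abs_add_rpow_le_of_forall_abs_one_add_rpow_le one_le_two (abs_one_add_rpow_le hp)⟩

/-- For every `p ∈ [1, 2]` and every real `a`, `|1 + a|^p ≤ 1 + ap + 4|a|^p`;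
consequently, for any real `x, y` and `p ∈ [1, 2]`,
`|x + y|^p ≤ |x|^p + p·y·|x|^{p−1}·sgn(x) + 4|y|^p`. -/
theorem abs_pow_add_ineq (p : ℝ) (hp : p ∈ Set.Icc (1 : ℝ) 2) :
    (∀ a : ℝ, |1 + a| ^ p ≤ 1 + a * p + 4 * |a| ^ p) ∧
    (∀ x y : ℝ, |x + y| ^ p ≤ |x| ^ p + p * y * |x| ^ (p - 1) * Real.sign x + 4 * |y| ^ p) := by
  have two_le_four (t : ℝ) : 2 * |t| ^ p ≤ 4 * |t| ^ p := by gcongr; norm_num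
  exact (abs_pow_add_ineq_general p hp).imp (fun h a => (h a).trans (by grw [two_le_four]))
    (fun h x y => (h x y).trans (by grw [two_le_four]))
end

section
/- Let p ∈ [1, 2]. Every non-empty bounded set M of symmetric n×n matrices that is uniformly p-PD is uniformly 2-PD; equivalently, there exists λ > 0 such that the smallest eigenvalue of every Q ∈ M is at least λ. -/
open Matrix

/-- `Q` is `p`-positive definite: `v⊤ Q v^{⟨p−1⟩} > 0` for every `v` with `‖v‖_p = 1`. -/
def PPosDef {n : ℕ} (p : ℝ) (Q : Matrix (Fin n) (Fin n) ℝ) : Prop :=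
  ∀ v : Fin n → ℝ, pNorm p v = 1 → 0 < v ⬝ᵥ Q.mulVec (signedPow (p - 1) v)

/-- `M` is uniformly `p`-positive definite: every matrix in the closure of `M` is `p`-PD. -/
def UnifPPosDef {n : ℕ} (p : ℝ) (M : Set (Matrix (Fin n) (Fin n) ℝ)) : Prop :=
  ∀ Q ∈ closure M, PPosDef p Q

/-!
If `v` is an eigenvector of a symmetric `p`-positive definite matrix `Q`, with eigenvalue `μ` and
`‖v‖_p = 1`, then moving `Q` to the left factor gives
`0 < v⊤ Q v^{⟨p−1⟩} = μ · v⊤ v^{⟨p−1⟩} = μ · Σ_i |v_i|^p`, so `μ > 0`. Hence every matrix in the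
closure of `M` is positive definite in the usual sense. This closure is compact, so the quadratic
form `v⊤ Q v` attains a positive minimum over it and the Euclidean unit sphere.
-/

theorem real_sign_eq_coe_sign (x : ℝ) : Real.sign x = (SignType.sign x : ℝ) := by
  obtain hx | rfl | hx := lt_trichotomy x 0
  · rw [Real.sign_of_neg hx, sign_neg hx, SignType.coe_neg_one]
  · rw [Real.sign_zero, sign_zero, SignType.coe_zero]
  · rw [Real.sign_of_pos hx, sign_pos hx, SignType.coe_one]

theorem mul_sign_mul_abs_rpow_sub_one {p : ℝ} (hp : p ≠ 0) (x : ℝ) :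
    x * (Real.sign x * |x| ^ (p - 1)) = |x| ^ p := by
  obtain rfl | hx := eq_or_ne x 0
  · rw [zero_mul, abs_zero, Real.zero_rpow hp]
  · have habs : |x| ≠ 0 := abs_ne_zero.mpr hx
    rw [← mul_assoc, real_sign_eq_coe_sign, self_mul_sign, Real.rpow_sub_one habs,
      mul_div_cancel₀ _ habs]

section SignedPow

variable {n : ℕ} {p : ℝ}

theorem signedPow_one (v : Fin n → ℝ) : signedPow 1 v = v := by
  funext i
  rw [signedPow, Real.rpow_one, real_sign_eq_coe_sign, sign_mul_abs]

theorem dotProduct_signedPow_sub_one (hp : p ≠ 0) (v : Fin n → ℝ) :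
    v ⬝ᵥ signedPow (p - 1) v = ∑ i, |v i| ^ p :=
  Finset.sum_congr rfl fun i _ => mul_sign_mul_abs_rpow_sub_one hp (v i)

theorem pNorm_pos (p : ℝ) {v : Fin n → ℝ} (hv : v ≠ 0) : 0 < pNorm p v := by
  obtain ⟨i, hi⟩ := Function.ne_iff.mp hv
  exact Real.rpow_pos_of_pos (Finset.sum_pos' (fun _ _ => by positivity)
    ⟨i, Finset.mem_univ i, Real.rpow_pos_of_pos (abs_pos.mpr hi) p⟩) _

theorem pNorm_smul (hp : p ≠ 0) (c : ℝ) (v : Fin n → ℝ) :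
    pNorm p (c • v) = |c| * pNorm p v := by
  have hsum : ∑ i, |(c • v) i| ^ p = |c| ^ p * ∑ i, |v i| ^ p := by
    simp only [Pi.smul_apply, smul_eq_mul, abs_mul, Finset.mul_sum,
      Real.mul_rpow (abs_nonneg _) (abs_nonneg _)]
  rw [pNorm, hsum, Real.mul_rpow (by positivity) (by positivity), one_div,
    Real.rpow_rpow_inv (abs_nonneg c) hp, pNorm, one_div]

theorem pNorm_inv_pNorm_smul (hp : p ≠ 0) {v : Fin n → ℝ} (hv : v ≠ 0) :
    pNorm p ((pNorm p v)⁻¹ • v) = 1 := by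
  have hpos := pNorm_pos p hv
  rw [pNorm_smul hp, abs_of_pos (inv_pos.mpr hpos), inv_mul_cancel₀ hpos.ne']

end SignedPow

section PosDef

variable {n : ℕ} {p : ℝ} {Q : Matrix (Fin n) (Fin n) ℝ}

theorem PPosDef.pos_of_mulVec_eq_smul (h : PPosDef p Q) (hp : p ≠ 0) (hQ : Q.IsSymm)
    {v : Fin n → ℝ} (hv : v ≠ 0) {μ : ℝ} (hμ : Q *ᵥ v = μ • v) : 0 < μ := by
  set u := (pNorm p v)⁻¹ • v
  have hu : Q *ᵥ u = μ • u := by rw [mulVec_smul, hμ, smul_comm]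
  have key : u ⬝ᵥ Q *ᵥ signedPow (p - 1) u = μ * ∑ i, |u i| ^ p := by
    rw [dotProduct_mulVec, ← mulVec_transpose, hQ.eq, hu, smul_dotProduct,
      dotProduct_signedPow_sub_one hp, smul_eq_mul]
  have hprod : 0 < μ * ∑ i, |u i| ^ p := key ▸ h u (pNorm_inv_pNorm_smul hp hv)
  exact pos_of_mul_pos_left hprod (by positivity)

theorem PPosDef.posDef (h : PPosDef p Q) (hp : p ≠ 0) (hQ : Q.IsSymm) : Q.PosDef := by
  have hH : Q.IsHermitian := (conjTranspose_eq_transpose_of_trivial Q).trans hQ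
  refine hH.posDef_iff_eigenvalues_pos.mpr fun i => ?_
  have hne : (hH.eigenvectorBasis i).ofLp ≠ 0 :=
    (WithLp.ofLp_eq_zero 2).not.mpr (hH.eigenvectorBasis.orthonormal.ne_zero i)
  exact h.pos_of_mulVec_eq_smul hp hQ hne (hH.mulVec_eigenvectorBasis i)

theorem pPosDef_two_of_posDef (hQ : Q.PosDef) : PPosDef 2 Q := by
  intro v hv
  have hv0 : v ≠ 0 := by
    rintro rfl
    simp [pNorm] at hv
  rw [show (2 : ℝ) - 1 = 1 by norm_num, signedPow_one]
  exact hQ.dotProduct_mulVec_pos hv0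

end PosDef

section Topology

theorem isClosed_setOf_isSymm {ι α : Type*} [TopologicalSpace α] [T2Space α] :
    IsClosed {Q : Matrix ι ι α | Q.IsSymm} :=
  isClosed_eq continuous_id.matrix_transpose continuous_id

theorem isCompact_closure_of_forall_norm_le {ι κ α : Type*} [SeminormedAddCommGroup α]
    [ProperSpace α] {M : Set (Matrix ι κ α)} {C : ℝ} (hM : ∀ Q ∈ M, ∀ i j, ‖Q i j‖ ≤ C) :
    IsCompact (closure M) := by
  have hbox : IsCompact (Set.univ.pi fun _ : ι => Set.univ.pi fun _ : κ =>
      Metric.closedBall (0 : α) C) :=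
    isCompact_univ_pi fun _ => isCompact_univ_pi fun _ => isCompact_closedBall 0 C
  exact hbox.closure_of_subset fun Q hQ i _ j _ => mem_closedBall_zero_iff.mpr (hM Q hQ i j)

theorem exists_pos_forall_mul_norm_pow_le {X E : Type*} [TopologicalSpace X]
    [NormedAddCommGroup E] [NormedSpace ℝ E] [ProperSpace E] {K : Set X} (hK : IsCompact K)
    {f : X → E → ℝ} (hf : ContinuousOn (Function.uncurry f) (K ×ˢ Metric.sphere 0 1))
    {k : ℕ} (hk : k ≠ 0) (hsmul : ∀ x ∈ K, ∀ c : ℝ, 0 ≤ c → ∀ v, f x (c • v) = c ^ k * f x v)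
    (hpos : ∀ x ∈ K, ∀ v, v ≠ 0 → 0 < f x v) :
    ∃ l : ℝ, 0 < l ∧ ∀ x ∈ K, ∀ v, l * ‖v‖ ^ k ≤ f x v := by
  obtain ⟨l, hl, hmin⟩ := (hK.prod (isCompact_sphere (0 : E) 1)).exists_forall_le' hf
    (a := 0) fun ⟨x, v⟩ ⟨hx, hv⟩ => hpos x hx v (ne_zero_of_mem_unit_sphere ⟨v, hv⟩)
  refine ⟨l, hl, fun x hx v => ?_⟩
  obtain rfl | hv := eq_or_ne v 0
  · have hzero : f x 0 = 0 := by simpa [hk] using hsmul x hx 0 le_rfl 0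
    rw [hzero, norm_zero, zero_pow hk, mul_zero]
  · have hunit : ‖v‖⁻¹ • v ∈ Metric.sphere (0 : E) 1 :=
      mem_sphere_zero_iff_norm.mpr (norm_smul_inv_norm (𝕜 := ℝ) hv)
    calc l * ‖v‖ ^ k ≤ f x (‖v‖⁻¹ • v) * ‖v‖ ^ k := by
          gcongr
          exact hmin (x, ‖v‖⁻¹ • v) ⟨hx, hunit⟩
      _ = f x (‖v‖ • ‖v‖⁻¹ • v) := by rw [hsmul x hx _ (norm_nonneg v), mul_comm]
      _ = f x v := by rw [smul_inv_smul₀ (norm_ne_zero_iff.mpr hv)]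

theorem exists_pos_forall_mul_sum_sq_le_dotProduct_mulVec {ι : Type*} [Fintype ι]
    {K : Set (Matrix ι ι ℝ)} (hK : IsCompact K)
    (hpos : ∀ Q ∈ K, ∀ v, v ≠ 0 → 0 < v ⬝ᵥ Q *ᵥ v) :
    ∃ l : ℝ, 0 < l ∧ ∀ Q ∈ K, ∀ v : ι → ℝ, l * ∑ i, v i ^ 2 ≤ v ⬝ᵥ Q *ᵥ v := by
  let f (Q : Matrix ι ι ℝ) (v : EuclideanSpace ℝ ι) : ℝ := v.ofLp ⬝ᵥ Q *ᵥ v.ofLp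
  have hf : Continuous (Function.uncurry f) := by
    have hv : Continuous fun x : Matrix ι ι ℝ × EuclideanSpace ℝ ι => x.2.ofLp := by fun_prop
    exact hv.dotProduct (continuous_fst.matrix_mulVec hv)
  have hsmul (Q : Matrix ι ι ℝ) (c : ℝ) (v : EuclideanSpace ℝ ι) :
      f Q (c • v) = c ^ 2 * f Q v := by
    simp only [f, WithLp.ofLp_smul, mulVec_smul, smul_dotProduct, dotProduct_smul, smul_eq_mul]
    ring
  obtain ⟨l, hl, hle⟩ := exists_pos_forall_mul_norm_pow_le hK hf.continuousOn two_ne_zero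
    (fun Q _ c _ v => hsmul Q c v)
    (fun Q hQ v hv => hpos Q hQ v.ofLp ((WithLp.ofLp_eq_zero 2).not.mpr hv))
  refine ⟨l, hl, fun Q hQ v => ?_⟩
  simpa only [EuclideanSpace.real_norm_sq_eq] using hle Q hQ (WithLp.toLp 2 v)

end Topology

theorem UnifPPosDef.posDef_of_mem_closure {n : ℕ} {p : ℝ} {M : Set (Matrix (Fin n) (Fin n) ℝ)}
    (h : UnifPPosDef p M) (hp : p ≠ 0) (hsymm : ∀ Q ∈ M, Q.IsSymm)
    {Q : Matrix (Fin n) (Fin n) ℝ} (hQ : Q ∈ closure M) : Q.PosDef :=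
  (h Q hQ).posDef hp (closure_minimal hsymm isClosed_setOf_isSymm hQ)

/-- For `p < 1` the power `v^{⟨p−1⟩}` has a negative exponent and vanishes where `v` does; any other
value there would serve as well, since it only enters through `v_i · v_i^{⟨p−1⟩}`. -/
theorem unifPPosDef_unifTwoPPosDef_general {n : ℕ} {p : ℝ} (hp : 0 < p)
    {M : Set (Matrix (Fin n) (Fin n) ℝ)} (hbdd : ∃ C : ℝ, ∀ Q ∈ M, ∀ i j, |Q i j| ≤ C)
    (hsymm : ∀ Q ∈ M, Q.IsSymm) (h : UnifPPosDef p M) :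
    UnifPPosDef 2 M ∧
      ∃ lam : ℝ, 0 < lam ∧ ∀ Q ∈ M, ∀ v : Fin n → ℝ,
        lam * (∑ i, v i ^ 2) ≤ v ⬝ᵥ Q.mulVec v := by
  have hposDef : ∀ Q ∈ closure M, Q.PosDef := fun _ => h.posDef_of_mem_closure hp.ne' hsymm
  obtain ⟨C, hC⟩ := hbdd
  obtain ⟨lam, hlam, hle⟩ := exists_pos_forall_mul_sum_sq_le_dotProduct_mulVec
    (isCompact_closure_of_forall_norm_le hC)
    fun Q hQ _ hv => (hposDef Q hQ).dotProduct_mulVec_pos hv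
  exact ⟨fun Q hQ => pPosDef_two_of_posDef (hposDef Q hQ), lam, hlam,
    fun Q hQ => hle Q (subset_closure hQ)⟩

/-- for `p ∈ [1,2]`, every non-empty bounded set of symmetric matrices that
is uniformly `p`-PD is uniformly `2`-PD; equivalently, there is `λ > 0` such that the
smallest eigenvalue of every `Q ∈ M` is at least `λ`, i.e.
`v⊤ Q v ≥ λ |v|²` for all `v` and all `Q ∈ M`. -/
theorem unifPPosDef_unifTwoPPosDef {n : ℕ} (p : ℝ) (hp : p ∈ Set.Icc (1 : ℝ) 2)
    (M : Set (Matrix (Fin n) (Fin n) ℝ)) (hne : M.Nonempty)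
    (hbdd : ∃ C : ℝ, ∀ Q ∈ M, ∀ i j, |Q i j| ≤ C)
    (hsymm : ∀ Q ∈ M, Q.IsSymm) (h : UnifPPosDef p M) :
    UnifPPosDef 2 M ∧
      ∃ lam : ℝ, 0 < lam ∧ ∀ Q ∈ M, ∀ v : Fin n → ℝ,
        lam * (∑ i, v i ^ 2) ≤ v ⬝ᵥ Q.mulVec v :=
  unifPPosDef_unifTwoPPosDef_general (zero_lt_one.trans_le hp.1) hbdd hsymm h
end

section
/- Let {γ_t} be a sequence of positive reals with γ_t ≍ t^{−ρ} for some ρ ∈ (0, 1), and let 0 < ρ < κ ≤ 1. Then for every λ > 0, lim_{t→∞} t^{−κ} Σ_{j=1}^{t−1} exp(−λ Σ_{i=j}^{t−1} γ_i) = 0. -/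
open Filter Topology

/-!
The sums `S t = ∑_{1 ≤ j < t} exp (-∑_{j ≤ i < t} x i)` satisfy `S (t + 1) = (S t + 1) exp (-x t)`.
If `w` is nondecreasing and `w t * x t ≥ 1`, then `u ≤ w t` implies `u + 1 ≤ w t (1 + x t)`, and
`1 + x ≤ exp x` yields `(u + 1) exp (-x t) ≤ w t ≤ w (t + 1)`: such a `w` is a supersolution of the
recursion. For `x t = λ γ t` with `γ t ≥ a t ^ (-ρ)`, a multiple of `t ^ ρ` is one, whence
`S t = O(t ^ ρ) = o(t ^ κ)`.
-/

open Asymptotics Finset Real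

/-- The sum over the starting times `1 ≤ j < t` of the discount factors `exp (-∑ i ∈ [j, t), x i)`,
where `x i` is the discount rate during step `i`; the sums of the main theorem have
`x i = lam * γ i`. -/
noncomputable def discountedSum (x : ℕ → ℝ) (t : ℕ) : ℝ :=
  ∑ j ∈ Ico 1 t, exp (-∑ i ∈ Ico j t, x i)

namespace discountedSum

lemma nonneg (x : ℕ → ℝ) (t : ℕ) : 0 ≤ discountedSum x t :=
  sum_nonneg fun _ _ => (exp_pos _).le

lemma succ (x : ℕ → ℝ) {t : ℕ} (ht : 1 ≤ t) :
    discountedSum x (t + 1) = (discountedSum x t + 1) * exp (-x t) := by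
  have exp_succ : ∀ j ∈ Ico 1 t,
      exp (-∑ i ∈ Ico j (t + 1), x i) = exp (-∑ i ∈ Ico j t, x i) * exp (-x t) := by
    intro j hj
    rw [sum_Ico_succ_top (mem_Ico.1 hj).2.le, neg_add, exp_add]
  simp only [discountedSum]
  rw [sum_Ico_succ_top ht, sum_congr rfl exp_succ, ← sum_mul, Nat.Ico_succ_singleton,
    sum_singleton, add_one_mul]

end discountedSum

lemma add_one_mul_exp_neg_le {u w x : ℝ} (hw : 0 ≤ w) (huw : u ≤ w) (hwx : 1 ≤ w * x) :
    (u + 1) * exp (-x) ≤ w := by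
  rw [exp_neg, ← div_eq_mul_inv, div_le_iff₀ (exp_pos x)]
  calc u + 1 ≤ w * (x + 1) := by linarith
    _ ≤ w * exp x := mul_le_mul_of_nonneg_left (add_one_le_exp x) hw

lemma le_of_succ_le_add_one_mul_exp_neg {u w x : ℕ → ℝ} {T : ℕ}
    (hu : ∀ t ≥ T, u (t + 1) ≤ (u t + 1) * exp (-x t))
    (hw_mono : MonotoneOn w (Set.Ici T)) (hw_nonneg : 0 ≤ w T)
    (hwx : ∀ t ≥ T, 1 ≤ w t * x t) (hT : u T ≤ w T) {t : ℕ} (ht : T ≤ t) :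
    u t ≤ w t := by
  induction t, ht using Nat.le_induction with
  | base => exact hT
  | succ t ht ih =>
    have hwt : 0 ≤ w t := hw_nonneg.trans (hw_mono Set.self_mem_Ici ht ht)
    calc u (t + 1) ≤ (u t + 1) * exp (-x t) := hu t ht
      _ ≤ w t := add_one_mul_exp_neg_le hwt ih (hwx t ht)
      _ ≤ w (t + 1) := hw_mono ht (Nat.le_succ_of_le ht) t.le_succ

lemma discountedSum_isBigO {x w : ℕ → ℝ} {a : ℝ} (ha : 0 < a) (hw_mono : Monotone w)
    (hw_pos : ∀ᶠ t in atTop, 0 < w t) (hwx : ∀ᶠ t in atTop, a ≤ w t * x t) :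
    discountedSum x =O[atTop] w := by
  obtain ⟨T, hT⟩ := eventually_atTop.1 ((hw_pos.and hwx).and (eventually_ge_atTop 1))
  have hwT : 0 < w T := (hT T le_rfl).1.1
  set C : ℝ := max a⁻¹ (discountedSum x T / w T)
  have hC : 0 < C := (inv_pos.2 ha).trans_le (le_max_left _ _)
  have one_le : ∀ t ≥ T, 1 ≤ C * w t * x t := fun t ht =>
    calc 1 = a⁻¹ * a := (inv_mul_cancel₀ ha.ne').symm
      _ ≤ C * (w t * x t) := mul_le_mul (le_max_left _ _) (hT t ht).1.2 ha.le hC.le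
      _ = C * w t * x t := (mul_assoc _ _ _).symm
  have le_mul : ∀ t ≥ T, discountedSum x t ≤ C * w t := fun t ht =>
    le_of_succ_le_add_one_mul_exp_neg (w := fun t => C * w t)
      (fun t ht => (discountedSum.succ x (hT t ht).2).le)
      ((hw_mono.const_mul hC.le).monotoneOn _) (mul_pos hC hwT).le one_le
      ((div_le_iff₀ hwT).1 (le_max_right _ _)) ht
  refine .of_bound C ?_
  filter_upwards [eventually_ge_atTop T] with t ht
  rw [norm_of_nonneg (discountedSum.nonneg x t), norm_of_nonneg (hT t ht).1.1.le]
  exact le_mul t ht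

lemma eventually_natCast_rpow_pos (r : ℝ) : ∀ᶠ t : ℕ in atTop, 0 < (t : ℝ) ^ r := by
  filter_upwards [eventually_gt_atTop 0] with t ht
  exact rpow_pos_of_pos (Nat.cast_pos.2 ht) r

lemma discountedSum_isBigO_rpow {x : ℕ → ℝ} {a ρ : ℝ} (ha : 0 < a) (hρ : 0 ≤ ρ)
    (hx : ∀ᶠ t : ℕ in atTop, a * (t : ℝ) ^ (-ρ) ≤ x t) :
    discountedSum x =O[atTop] fun t : ℕ => (t : ℝ) ^ ρ := by
  refine discountedSum_isBigO ha
    (fun s t hst => rpow_le_rpow s.cast_nonneg (Nat.cast_le.2 hst) hρ)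
    (eventually_natCast_rpow_pos ρ) ?_
  filter_upwards [hx, eventually_natCast_rpow_pos ρ] with t hxt ht
  rwa [rpow_neg t.cast_nonneg, ← div_eq_mul_inv, div_le_iff₀' ht] at hxt

lemma tendsto_rpow_neg_mul_of_isBigO_rpow {u : ℕ → ℝ} {ρ κ : ℝ} (hκ : ρ < κ)
    (hu : u =O[atTop] fun t : ℕ => (t : ℝ) ^ ρ) :
    Tendsto (fun t : ℕ => (t : ℝ) ^ (-κ) * u t) atTop (𝓝 0) := by
  have rpow_mul_rpow : (fun t : ℕ => (t : ℝ) ^ (-(κ - ρ))) =ᶠ[atTop]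
      fun t : ℕ => (t : ℝ) ^ (-κ) * (t : ℝ) ^ ρ := by
    filter_upwards [eventually_gt_atTop 0] with t ht
    rw [← rpow_add (Nat.cast_pos.2 ht), neg_sub, sub_eq_neg_add]
  have rpow_tendsto : Tendsto (fun t : ℕ => (t : ℝ) ^ (-(κ - ρ))) atTop (𝓝 0) :=
    (tendsto_rpow_neg_atTop (sub_pos.2 hκ)).comp tendsto_natCast_atTop_atTop
  exact ((isBigO_refl _ _).mul hu).trans_tendsto (rpow_tendsto.congr' rpow_mul_rpow)

lemma eventually_mul_le_of_tendsto_div {α : Type*} {l : Filter α} {f g : α → ℝ} {b c : ℝ}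
    (hbc : b < c) (hg : ∀ᶠ t in l, 0 < g t) (hfg : Tendsto (fun t => f t / g t) l (𝓝 c)) :
    ∀ᶠ t in l, b * g t ≤ f t := by
  filter_upwards [hfg.eventually_const_le hbc, hg] with t hbt hgt
  exact (le_div_iff₀ hgt).1 hbt

theorem exp_sum_stepsize_tendsto_zero_general {γ : ℕ → ℝ} {ρ κ a lam : ℝ} (hρ : 0 ≤ ρ)
    (hκ : ρ < κ) (ha : 0 < a) (hγ : ∀ᶠ t : ℕ in atTop, a * (t : ℝ) ^ (-ρ) ≤ γ t)
    (hlam : 0 < lam) :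
    Tendsto
      (fun t : ℕ => (t : ℝ) ^ (-κ) *
        ∑ j ∈ Finset.Ico 1 t, Real.exp (-lam * ∑ i ∈ Finset.Ico j t, γ i))
      atTop (𝓝 0) := by
  have rate_ge : ∀ᶠ t : ℕ in atTop, lam * a * (t : ℝ) ^ (-ρ) ≤ lam * γ t :=
    hγ.mono fun t ht => by
      rw [mul_assoc]
      exact mul_le_mul_of_nonneg_left ht hlam.le
  have sum_isBigO := discountedSum_isBigO_rpow (mul_pos hlam ha) hρ rate_ge
  simpa only [discountedSum, ← mul_sum, neg_mul] using
    tendsto_rpow_neg_mul_of_isBigO_rpow hκ sum_isBigO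

/-- if `γ_t ≍ t^{−ρ}` with `0 < ρ < κ ≤ 1`, then for every `λ > 0`,
`t^{−κ} Σ_{j=1}^{t−1} exp(−λ Σ_{i=j}^{t−1} γ_i) → 0` as `t → ∞`. -/
theorem exp_sum_stepsize_tendsto_zero (γ : ℕ → ℝ) (hγpos : ∀ t, 0 < γ t)
    (ρ κ : ℝ) (hρ0 : 0 < ρ) (hρ1 : ρ < 1)
    (c : ℝ) (hc : 0 < c)
    (hasymp : Tendsto (fun t : ℕ => γ t / (t : ℝ) ^ (-ρ)) atTop (𝓝 c))
    (hκ : ρ < κ) (hκ1 : κ ≤ 1) (lam : ℝ) (hlam : 0 < lam) :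
    Tendsto
      (fun t : ℕ => (t : ℝ) ^ (-κ) *
        ∑ j ∈ Finset.Ico 1 t, Real.exp (-lam * ∑ i ∈ Finset.Ico j t, γ i))
      atTop (𝓝 0) :=
  exp_sum_stepsize_tendsto_zero_general hρ0.le hκ (half_pos hc)
    (eventually_mul_le_of_tendsto_div (half_lt_self hc) (eventually_natCast_rpow_pos (-ρ)) hasymp)
    hlam
end
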